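/- arXiv:math/0403484 — 2 statements merged into one kernel-verified Lean document; each statement's English description precedes it below -/
import Mathlib

section
/- If p and q are nonzero bivariate polynomials over an algebraically closed field whose leading homogeneous forms (of degrees n and m respectively) have no common nontrivial zero, then the system p(x,y)=0, q(x,y)=0 has at most n·m solutions. -/
open MvPolynomial

namespace BezoutAux

lemma hc_mul {k : Type*} [Field k] (f g : MvPolynomial (Fin 2) k) (r s : ℕ)
    (hf : f.totalDegree ≤ r) (hg : g.totalDegree ≤ s) :
    homogeneousComponent (r + s) (f * g)
      = homogeneousComponent r f * homogeneousComponent s g := by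
  classical
  ext d
  rw [coeff_homogeneousComponent, coeff_mul, coeff_mul]
  have key : ∀ x ∈ Finset.HasAntidiagonal.antidiagonal d,
      (if d.degree = r + s then coeff x.1 f * coeff x.2 g else 0) =
      coeff x.1 (homogeneousComponent r f) * coeff x.2 (homogeneousComponent s g) := by
    rintro ⟨a, b⟩ hx
    rw [Finset.HasAntidiagonal.mem_antidiagonal] at hx
    simp only at hx ⊢
    have hd : d.degree = a.degree + b.degree := by rw [← hx, map_add]
    rw [coeff_homogeneousComponent, coeff_homogeneousComponent]
    have h0 : ∀ (u : MvPolynomial (Fin 2) k) (t : ℕ), u.totalDegree ≤ t →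
        ∀ c : Fin 2 →₀ ℕ, t < c.degree → coeff c u = 0 := by
      intro u t hu c hc
      apply coeff_eq_zero_of_totalDegree_lt
      rw [Finsupp.degree_apply] at hc
      exact lt_of_le_of_lt hu hc
    rcases lt_or_ge r a.degree with h1 | h1
    · simp [h0 f r hf a h1]
    rcases lt_or_ge s b.degree with h2 | h2
    · simp [h0 g s hg b h2]
    by_cases h3 : a.degree = r <;> by_cases h4 : b.degree = s
    · simp [hd, h3, h4]
    · rw [if_neg (by omega)]; simp [h4]
    · rw [if_neg (by omega)]; simp [h3]
    · rw [if_neg (by omega)]; simp [h3]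
  rw [← Finset.sum_congr rfl key]
  split_ifs <;> simp

lemma exists_zero {k : Type*} [Field k] [IsAlgClosed k] (h : MvPolynomial (Fin 2) k) (r : ℕ)
    (hr : 0 < r) (hh : h.IsHomogeneous r) :
    ∃ a b : k, ¬(a = 0 ∧ b = 0) ∧ eval ![a, b] h = 0 := by
  by_cases h01 : eval ![0, 1] h = 0
  · exact ⟨0, 1, by simp, h01⟩
  let f : Polynomial k := aeval ![1, Polynomial.X] h
  have hf : f.coeff r = eval ![0, 1] h := by
    simp only [f]
    rw [aeval_def, eval₂_eq', eval_eq', Polynomial.finsetSum_coeff]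
    apply Finset.sum_congr rfl
    intro d hd
    have hdeg : d 0 + d 1 = r := by
      have := hh (mem_support_iff.mp hd)
      rw [Finsupp.weight_apply, Finsupp.sum_fintype _ _ (by simp)] at this
      simpa [Fin.sum_univ_two] using this
    simp only [Fin.prod_univ_two, Matrix.cons_val_zero, Matrix.cons_val_one, one_pow, one_mul,
      mul_one, Polynomial.algebraMap_eq, Polynomial.coeff_C_mul, Polynomial.coeff_X_pow]
    congr 1
    by_cases h0 : d 0 = 0
    · rw [if_pos (by omega), h0, pow_zero]
    · rw [if_neg (by omega), zero_pow h0]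
  have hdeg : f.degree ≠ 0 := by
    intro h0
    rw [Polynomial.eq_C_of_degree_eq_zero h0, Polynomial.coeff_C, if_neg (by omega)] at hf
    exact h01 hf.symm
  obtain ⟨t, ht⟩ := IsAlgClosed.exists_root f hdeg
  refine ⟨1, t, by simp, ?_⟩
  have : Polynomial.aeval t f = eval ![1, t] h := by
    simp only [f]
    rw [← AlgHom.comp_apply, comp_aeval]
    rw [aeval_def, eval₂_eq', eval_eq']
    simp [Fin.prod_univ_two]
  rw [← this]
  simpa using ht

lemma relPrime {k : Type*} [Field k] [IsAlgClosed k]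
    (p q : MvPolynomial (Fin 2) k) (n m : ℕ)
    (hp : p ≠ 0) (hq : q ≠ 0)
    (hpn : p.totalDegree = n) (hqm : q.totalDegree = m)
    (hlead : ∀ a b : k, ¬(a = 0 ∧ b = 0) →
      ¬(eval ![a, b] (homogeneousComponent n p) = 0 ∧
        eval ![a, b] (homogeneousComponent m q) = 0)) : IsRelPrime p q := by
  rintro g ⟨u, rfl⟩ ⟨v, rfl⟩
  have hg : g ≠ 0 := left_ne_zero_of_mul hp
  have hu : u ≠ 0 := right_ne_zero_of_mul hp
  have hv : v ≠ 0 := right_ne_zero_of_mul hq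
  rw [totalDegree_mul_of_isDomain hg hu] at hpn
  rw [totalDegree_mul_of_isDomain hg hv] at hqm
  subst hpn hqm
  rw [hc_mul _ _ _ _ le_rfl le_rfl, hc_mul _ _ _ _ le_rfl le_rfl] at hlead
  by_cases h0 : g.totalDegree = 0
  · rw [totalDegree_eq_zero_iff_eq_C] at h0
    rw [h0]
    apply IsUnit.map
    rw [isUnit_iff_ne_zero]
    intro h1
    rw [h1] at h0
    exact hg (by simpa using h0)
  · obtain ⟨a, b, hab, hz⟩ := exists_zero _ _ (Nat.pos_of_ne_zero h0)
      (homogeneousComponent_isHomogeneous g.totalDegree g)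
    exact absurd ⟨by simp [hz], by simp [hz]⟩ (hlead a b hab)

lemma finrank_V (k : Type*) [Field k] (d : ℕ) :
    2 * Module.finrank k (restrictTotalDegree (Fin 2) k d) = (d + 1) * (d + 2) := by
  have e : {s : Fin 2 →₀ ℕ | (s.sum fun _ e => e) ≤ d} ≃ (i : Fin (d + 1)) × Fin (i.1 + 1) :=
    { toFun := fun s => ⟨⟨s.1 0 + s.1 1, by
          have := s.2
          rw [Set.mem_ofPred_eq, Finsupp.sum_fintype _ _ (by simp), Fin.sum_univ_two] at this
          omega⟩, ⟨s.1 0, by simp⟩⟩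
      invFun := fun x => ⟨Finsupp.equivFunOnFinite.symm ![x.2.1, x.1.1 - x.2.1], by
          rw [Set.mem_ofPred_eq, Finsupp.sum_fintype _ _ (by simp), Fin.sum_univ_two]
          have := x.1.2
          have := x.2.2
          simp
          omega⟩
      left_inv := by
        rintro ⟨s, hs⟩
        ext i
        fin_cases i <;> simp
      right_inv := by
        rintro ⟨⟨i, hi⟩, ⟨j, hj⟩⟩
        simp only at hj
        have : j + (i - j) = i := by omega
        ext
        · simp [this]
        · exact (Fin.heq_ext_iff (by simp [this])).2 (by simp) }
  have hc : Module.finrank k (restrictTotalDegree (Fin 2) k d)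
      = Nat.card {s : Fin 2 →₀ ℕ | (s.sum fun _ e => e) ≤ d} := 
    Module.finrank_eq_nat_card_basis (basisRestrictSupport k _)
  rw [hc, Nat.card_congr e, Nat.card_eq_fintype_card, Fintype.card_sigma]
  simp only [Fintype.card_fin]
  rw [Fin.sum_univ_eq_sum_range (fun i => i + 1)]
  clear hc e
  induction d with
  | zero => simp
  | succ d ih => rw [Finset.sum_range_succ, mul_add, ih]; ring

lemma sep {k : Type*} [Field k] (S : Finset (k × k)) (z : k × k) :
    ∃ f : MvPolynomial (Fin 2) k, f.totalDegree ≤ S.card ∧ eval ![z.1, z.2] f = 1 ∧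
      ∀ w ∈ S, w ≠ z → eval ![w.1, w.2] f = 0 := by
  classical
  induction S using Finset.induction_on with
  | empty => exact ⟨1, by simp, by simp, by simp⟩
  | insert w S hw ih =>
    obtain ⟨f, h1, h2, h3⟩ := ih
    have hl : ∃ l : MvPolynomial (Fin 2) k, l.totalDegree ≤ 1 ∧ eval ![z.1, z.2] l = 1 ∧
        (w ≠ z → eval ![w.1, w.2] l = 0) := by
      have hdeg : ∀ (i : Fin 2) (a c : k), (C c * (X i - C a) : MvPolynomial (Fin 2) k).totalDegree ≤ 1 := by
        intro i a c
        refine (totalDegree_mul _ _).trans ?_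
        have := totalDegree_sub (X i) (C a : MvPolynomial (Fin 2) k)
        simpa using this
      by_cases hz : w = z
      · exact ⟨1, by simp, by simp, fun h => absurd hz h⟩
      by_cases h : w.1 = z.1
      · have h' : z.2 - w.2 ≠ 0 := by
          intro h'; exact hz (Prod.ext h (sub_eq_zero.mp h').symm)
        exact ⟨C (z.2 - w.2)⁻¹ * (X 1 - C w.2), hdeg _ _ _, by simp [h'], by simp⟩
      · have h' : z.1 - w.1 ≠ 0 := by
          intro h'; exact h (sub_eq_zero.mp h').symm
        exact ⟨C (z.1 - w.1)⁻¹ * (X 0 - C w.1), hdeg _ _ _, by simp [h'], by simp⟩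
    obtain ⟨l, l1, l2, l3⟩ := hl
    refine ⟨f * l, ?_, by simp [h2, l2], ?_⟩
    · rw [Finset.card_insert_of_notMem hw]
      exact (totalDegree_mul _ _).trans (by omega)
    · intro x hx hxz
      rcases Finset.mem_insert.mp hx with rfl | hx
      · simp [l3 hxz]
      · simp [h3 x hx hxz]

lemma card_le {k : Type*} [Field k]
    (p q : MvPolynomial (Fin 2) k) (n m : ℕ)
    (hp : p ≠ 0) (hq : q ≠ 0)
    (hpn : p.totalDegree = n) (hqm : q.totalDegree = m) (hrel : IsRelPrime p q)
    (S : Finset (k × k))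
    (hS : ∀ z ∈ S, eval ![z.1, z.2] p = 0 ∧ eval ![z.1, z.2] q = 0) : S.card ≤ n * m := by
  classical
  set e := S.card with he
  let V := fun d => restrictTotalDegree (Fin 2) k d
  have memV : ∀ d f, f ∈ V d ↔ f.totalDegree ≤ d := fun d f => mem_restrictTotalDegree _ _ _
  -- evaluation map
  let ev : V (n + m + e) →ₗ[k] (S → k) :=
    LinearMap.pi (fun z : S => (aeval ![z.1.1, z.1.2] : MvPolynomial (Fin 2) k →ₐ[k] k).toLinearMap
      ∘ₗ (V (n + m + e)).subtype)
  have ev_apply : ∀ f z, ev f z = eval ![z.1.1, z.1.2] f.1 := by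
    intro f z
    simp [ev, aeval_eq_eval]
  have hsurj : Function.Surjective ev := by
    intro y
    choose f f1 f2 f3 using fun z : S => sep S z.1
    refine ⟨∑ z : S, y z • ⟨f z, (memV _ _).2 ((f1 z).trans (by omega))⟩, ?_⟩
    ext w
    rw [ev_apply]
    simp only [Submodule.coe_sum, Submodule.coe_smul, map_sum, smul_eval]
    rw [Finset.sum_eq_single w]
    · simp [f2]
    · intro z _ hz
      rw [f3 z w.1 w.2 (fun h => hz (Subtype.ext h.symm)), mul_zero]
    · simp
  -- multiplication map
  let mu : (V (m + e) × V (n + e)) →ₗ[k] V (n + m + e) :=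
    LinearMap.codRestrict _
      ((LinearMap.mulLeft k p ∘ₗ (V (m + e)).subtype).coprod
        (LinearMap.mulLeft k q ∘ₗ (V (n + e)).subtype)) (by
      rintro ⟨⟨a, ha⟩, ⟨b, hb⟩⟩
      rw [memV] at ha hb
      simp only [LinearMap.coprod_apply, LinearMap.comp_apply, Submodule.subtype_apply,
        LinearMap.mulLeft_apply]
      apply Submodule.add_mem
      · rw [memV]; exact (totalDegree_mul _ _).trans (by omega)
      · rw [memV]; exact (totalDegree_mul _ _).trans (by omega))
  have mu_apply : ∀ x, (mu x).1 = p * x.1.1 + q * x.2.1 := fun x => rfl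
  let la : V e →ₗ[k] (V (m + e) × V (n + e)) :=
    LinearMap.prod
      (LinearMap.codRestrict _ (LinearMap.mulLeft k q ∘ₗ (V e).subtype) (by
        rintro ⟨a, ha⟩
        rw [memV] at ha
        simp only [LinearMap.comp_apply, Submodule.subtype_apply, LinearMap.mulLeft_apply]
        rw [memV]; exact (totalDegree_mul _ _).trans (by omega)))
      (LinearMap.codRestrict _ (LinearMap.mulLeft k (-p) ∘ₗ (V e).subtype) (by
        rintro ⟨a, ha⟩
        rw [memV] at ha
        simp only [LinearMap.comp_apply, Submodule.subtype_apply, LinearMap.mulLeft_apply]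
        rw [memV]; exact (totalDegree_mul _ _).trans (by rw [totalDegree_neg]; omega)))
  have hker : LinearMap.ker mu ≤ LinearMap.range la := by
    rintro ⟨⟨a, ha⟩, ⟨b, hb⟩⟩ hx
    rw [LinearMap.mem_ker] at hx
    have hx : p * a + q * b = 0 := congrArg Subtype.val hx
    have hd : q ∣ p * a := ⟨-b, by linear_combination hx⟩
    obtain ⟨c, rfl⟩ := hrel.symm.dvd_of_dvd_mul_left hd
    have hb' : b = -p * c := by
      apply mul_left_cancel₀ hq
      linear_combination hx
    have hc : c ∈ V e := by
      rw [memV] at ha ⊢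
      by_cases hc0 : c = 0
      · simp [hc0]
      rw [totalDegree_mul_of_isDomain hq hc0] at ha
      omega
    refine ⟨⟨c, hc⟩, ?_⟩
    apply Prod.ext
    · rfl
    · exact Subtype.ext hb'.symm
  have hrange : LinearMap.range mu ≤ LinearMap.ker ev := by
    rintro _ ⟨x, rfl⟩
    rw [LinearMap.mem_ker]
    ext z
    rw [ev_apply, mu_apply]
    simp [(hS z.1 z.2).1, (hS z.1 z.2).2]
  have fin : ∀ d, Module.Finite k (V d) := fun d => inferInstanceAs
    (Module.Finite k (restrictTotalDegree (Fin 2) k d))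
  have r1 := LinearMap.finrank_range_add_finrank_ker ev
  have r2 := LinearMap.finrank_range_add_finrank_ker mu
  rw [LinearMap.range_eq_top.mpr hsurj, finrank_top, Module.finrank_fintype_fun_eq_card,
    Fintype.card_coe] at r1
  rw [Module.finrank_prod] at r2
  have r3 := Submodule.finrank_mono hrange
  have r4 := (Submodule.finrank_mono hker).trans (LinearMap.finrank_range_le la)
  have d1 := finrank_V k (n + m + e)
  have d2 := finrank_V k (m + e)
  have d3 := finrank_V k (n + e)
  have d4 := finrank_V k e
  change 2 * Module.finrank k (V _) = _ at d1 d2 d3 d4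
  rw [← he] at r1
  nlinarith

end BezoutAux

theorem stmt0 {k : Type*} [Field k] [IsAlgClosed k]
    (p q : MvPolynomial (Fin 2) k) (n m : ℕ)
    (hp : p ≠ 0) (hq : q ≠ 0)
    (hpn : p.totalDegree = n) (hqm : q.totalDegree = m)
    (hlead : ∀ a b : k, ¬(a = 0 ∧ b = 0) →
      ¬(eval ![a, b] (homogeneousComponent n p) = 0 ∧
        eval ![a, b] (homogeneousComponent m q) = 0)) :
    {z : k × k | eval ![z.1, z.2] p = 0 ∧ eval ![z.1, z.2] q = 0}.Finite ∧
    {z : k × k | eval ![z.1, z.2] p = 0 ∧ eval ![z.1, z.2] q = 0}.ncard ≤ n * m := by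
  have hrel := BezoutAux.relPrime p q n m hp hq hpn hqm hlead
  have key := BezoutAux.card_le p q n m hp hq hpn hqm hrel
  have hfin : {z : k × k | eval ![z.1, z.2] p = 0 ∧ eval ![z.1, z.2] q = 0}.Finite := by
    by_contra hinf
    obtain ⟨t, ht, htc⟩ := Set.Infinite.exists_subset_card_eq hinf (n * m + 1)
    have := key t (fun z hz => ht hz)
    omega
  refine ⟨hfin, ?_⟩
  rw [Set.ncard_eq_toFinset_card _ hfin]
  exact key _ (fun z hz => by simpa using hz)
end

section
/- Let P, Q ∈ k[x,y] be homogeneous of degrees n and m over an algebraically closed field k with no common nontrivial zero. Then the quotient ring k[x,y]/(P,Q) is a finite-dimensional k-vector space of dimension n·m. -/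
open MvPolynomial

universe u

lemma aux_step {k R S : Type u} [Field k] [CommRing R] [IsDomain R] [CommRing S] [IsDomain S]
    [Algebra k R] [Algebra k S] (φ : R →ₐ[k] S) (hs : Function.Surjective φ) (L P Q : R)
    (hker : ∀ f, φ f = 0 ↔ L ∣ f) (hL : L ≠ 0) (hQ : φ Q ≠ 0) :
    Module.rank k (R ⧸ Ideal.span {L * P, Q}) =
      Module.rank k (S ⧸ Ideal.span {φ Q}) + Module.rank k (R ⧸ Ideal.span {P, Q}) := by
  have hφL : φ L = 0 := (hker L).2 dvd_rfl
  let g0 : R →ₐ[k] (S ⧸ Ideal.span {φ Q}) := (Ideal.Quotient.mkₐ k _).comp φ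
  have hg0 : ∀ f, g0 f = 0 ↔ φ Q ∣ φ f := fun f => by
    change Ideal.Quotient.mk _ (φ f) = 0 ↔ _
    rw [Ideal.Quotient.eq_zero_iff_mem, Ideal.mem_span_singleton]
  have hle : ∀ a ∈ Ideal.span {L * P, Q}, g0 a = 0 := by
    intro a ha
    rw [hg0]
    obtain ⟨x, y, rfl⟩ := Ideal.mem_span_pair.1 ha
    simp [hφL]
  let g : (R ⧸ Ideal.span {L * P, Q}) →ₐ[k] (S ⧸ Ideal.span {φ Q}) :=
    Ideal.Quotient.liftₐ _ g0 hle
  have hgmk : ∀ f, g (Ideal.Quotient.mk _ f) = g0 f := fun f => rfl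
  have hgs : Function.Surjective g := by
    intro s
    obtain ⟨s, rfl⟩ := Ideal.Quotient.mk_surjective s
    obtain ⟨r, rfl⟩ := hs s
    exact ⟨Ideal.Quotient.mk _ r, rfl⟩
  let μ0 : R →ₗ[k] (R ⧸ Ideal.span {L * P, Q}) :=
    (Ideal.Quotient.mkₐ k _).toLinearMap ∘ₗ LinearMap.mulLeft k L
  have hμ0 : ∀ f, μ0 f = Ideal.Quotient.mk _ (L * f) := fun f => rfl
  have hμker : LinearMap.ker μ0 = (Ideal.span {P, Q}).restrictScalars k := by
    ext f
    rw [LinearMap.mem_ker, hμ0, Ideal.Quotient.eq_zero_iff_mem, Submodule.restrictScalars_mem,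
      Ideal.mem_span_pair, Ideal.mem_span_pair]
    constructor
    · rintro ⟨a, b, h⟩
      have : L ∣ b := by
        rw [← hker]
        have := congrArg φ h
        simpa [hφL, hQ] using this
      obtain ⟨b, rfl⟩ := this
      refine ⟨a, b, mul_left_cancel₀ hL ?_⟩
      rw [← h]; ring
    · rintro ⟨a, b, rfl⟩
      exact ⟨a, L * b, by ring⟩
  have hrange : LinearMap.range μ0 = LinearMap.ker g.toLinearMap := by
    ext x
    obtain ⟨f, rfl⟩ := Ideal.Quotient.mk_surjective x
    rw [LinearMap.mem_ker, LinearMap.mem_range]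
    change _ ↔ g0 f = 0
    rw [hg0]
    constructor
    · rintro ⟨y, hy⟩
      rw [hμ0] at hy
      have h2 : g0 (L * y) = g0 f := by rw [← hgmk, ← hgmk, hy]
      rw [← hg0, ← h2, hg0]
      simp [hφL]
    · rintro ⟨s, h⟩
      obtain ⟨r, rfl⟩ := hs s
      have : φ (f - Q * r) = 0 := by simp [h]
      obtain ⟨y, hy⟩ := (hker _).1 this
      refine ⟨y, ?_⟩
      rw [hμ0, ← hy, Ideal.Quotient.mk_eq_mk_iff_sub_mem]
      rw [Ideal.mem_span_pair]
      exact ⟨0, -r, by ring⟩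
  have h1 := LinearMap.rank_eq_of_surjective (f := g.toLinearMap) hgs
  rw [h1, ← hrange, ← μ0.quotKerEquivRange.rank_eq, hμker]
  congr 1

open Classical in
lemma aux_zero {k : Type u} [Field k] [IsAlgClosed k] (P : MvPolynomial (Fin 2) k) (n : ℕ)
    (hP : P.IsHomogeneous (n + 1)) : ∃ a b : k, ¬(a = 0 ∧ b = 0) ∧ eval ![a, b] P = 0 := by
  by_contra! H
  have hom : ∀ t a b : k, eval ![t * a, t * b] P = t ^ (n + 1) * eval ![a, b] P := by
    intro t a b
    rw [eval_eq', eval_eq', Finset.mul_sum]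
    refine Finset.sum_congr rfl fun s hs => ?_
    have := hP.degree_eq_sum_deg_support hs
    have h2 : n + 1 = s 0 + s 1 := by
      rw [this, ← Finsupp.degree_apply, Finsupp.degree_eq_sum]; simp
    simp only [Fin.prod_univ_two, Matrix.cons_val_zero, Matrix.cons_val_one]
    rw [h2]; ring
  have key : ∀ v : Fin 2 → Polynomial k, (∀ t, ¬ (eval ![(v 0).eval t, (v 1).eval t] P = 0)) →
      ∃ c, ∀ t, eval ![(v 0).eval t, (v 1).eval t] P = c := by
    intro v hv
    have hev : ∀ t, (aeval v P).eval t = eval ![(v 0).eval t, (v 1).eval t] P := by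
      intro t
      have : (Polynomial.aeval t).comp (aeval v) =
          (aeval ![(v 0).eval t, (v 1).eval t] : MvPolynomial (Fin 2) k →ₐ[k] k) := by
        ext i; fin_cases i <;> simp [Polynomial.aeval_def]
      have h := DFunLike.congr_fun this P
      simpa [Polynomial.coe_aeval_eq_eval, aeval_eq_eval] using h
    have hd : (aeval v P).degree = 0 := by
      by_contra h
      obtain ⟨t, ht⟩ := IsAlgClosed.exists_root _ h
      exact hv t (by rw [← hev]; exact ht)
    rw [Polynomial.eq_C_of_degree_eq_zero hd] at hev
    exact ⟨_, fun t => by rw [← hev t, Polynomial.eval_C]⟩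
  obtain ⟨c, hc⟩ := key ![Polynomial.X, 1] (fun t => H _ _ (by simp))
  obtain ⟨d, hd⟩ := key ![1, Polynomial.X] (fun t => H _ _ (by simp))
  simp at hc hd
  have hcd : c = d := by rw [← hc 1, ← hd 1]
  have hd0 : d ≠ 0 := by rw [← hd 1]; exact H _ _ (by simp)
  obtain ⟨u, hu⟩ := Infinite.exists_notMem_finset ({0, 1} : Finset k)
  simp at hu
  obtain ⟨t, ht⟩ := IsAlgClosed.exists_pow_nat_eq u (Nat.succ_pos n)
  have ht0 : t ≠ 0 := by rintro rfl; simp at ht; exact hu.1 ht.symm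
  have := hom t 1 t⁻¹
  rw [hd, mul_one, mul_inv_cancel₀ ht0, hc, hcd, ht] at this
  exact hu.2 (mul_right_cancel₀ hd0 (by rw [← this, one_mul]))

lemma aux_line {k : Type u} [Field k] (a b : k) (hab : ¬(a = 0 ∧ b = 0)) :
    let φ : MvPolynomial (Fin 2) k →ₐ[k] Polynomial k :=
      aeval ![Polynomial.C a * Polynomial.X, Polynomial.C b * Polynomial.X]
    let L : MvPolynomial (Fin 2) k := C b * X 0 - C a * X 1
    Function.Surjective φ ∧ (∀ f, φ f = 0 ↔ L ∣ f) ∧ L ≠ 0 := by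
  intro φ L
  obtain ⟨c, d, hcd⟩ : ∃ c d : k, c * a + d * b = 1 := by
    by_cases ha : a = 0
    · have hb : b ≠ 0 := fun hb => hab ⟨ha, hb⟩
      exact ⟨0, b⁻¹, by simp [hb]⟩
    · exact ⟨a⁻¹, 0, by simp [ha]⟩
  have hcd' : (C c * C a + C d * C b : MvPolynomial (Fin 2) k) = 1 := by
    rw [← C_mul, ← C_mul, ← C_add, hcd, C_1]
  have hcd'' : (Polynomial.C c * Polynomial.C a + Polynomial.C d * Polynomial.C b) = 1 := by
    rw [← Polynomial.C_mul, ← Polynomial.C_mul, ← Polynomial.C_add, hcd, Polynomial.C_1]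
  let ψ : Polynomial k →ₐ[k] MvPolynomial (Fin 2) k := Polynomial.aeval (C c * X 0 + C d * X 1)
  have hX0 : φ (X 0) = Polynomial.C a * Polynomial.X := by simp [φ]
  have hX1 : φ (X 1) = Polynomial.C b * Polynomial.X := by simp [φ]
  have hC : ∀ r, φ (C r) = Polynomial.C r := fun r => by simp [φ]
  have hψX : ψ Polynomial.X = C c * X 0 + C d * X 1 := by simp [ψ]
  have hψC : ∀ r, ψ (Polynomial.C r) = C r := fun r => by simp [ψ]
  have h1 : φ.comp ψ = AlgHom.id k _ := by
    ext1
    simp only [AlgHom.comp_apply, hψX, map_add, map_mul, hX0, hX1, hC, AlgHom.id_apply]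
    linear_combination Polynomial.X * hcd''
  have hφL : φ L = 0 := by
    simp only [L, map_sub, map_mul, hX0, hX1, hC]; ring
  have h2 : (Ideal.Quotient.mkₐ k (Ideal.span {L})).comp (ψ.comp φ) =
      Ideal.Quotient.mkₐ k (Ideal.span {L}) := by
    ext i
    simp only [AlgHom.comp_apply, Ideal.Quotient.mkₐ_eq_mk]
    rw [Ideal.Quotient.mk_eq_mk_iff_sub_mem, Ideal.mem_span_singleton]
    fin_cases i
    · change L ∣ ψ (φ (X 0)) - X 0
      rw [hX0, map_mul, hψC, hψX]
      exact ⟨-C d, by simp only [L]; linear_combination X 0 * hcd'⟩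
    · change L ∣ ψ (φ (X 1)) - X 1
      rw [hX1, map_mul, hψC, hψX]
      exact ⟨C c, by simp only [L]; linear_combination X 1 * hcd'⟩
  refine ⟨fun p => ⟨ψ p, DFunLike.congr_fun h1 p⟩, fun f => ⟨fun h => ?_, ?_⟩, fun h => hab ?_⟩
  · have := DFunLike.congr_fun h2 f
    simp only [AlgHom.comp_apply, h, map_zero, Ideal.Quotient.mkₐ_eq_mk] at this
    rw [← Ideal.mem_span_singleton]
    exact Ideal.Quotient.eq_zero_iff_mem.1 this.symm
  · rintro ⟨y, rfl⟩
    rw [map_mul, hφL, zero_mul]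
  · have e1 := congrArg (eval ![1, 0]) h
    have e2 := congrArg (eval ![0, 1]) h
    simp [L] at e1 e2
    exact ⟨e2, e1⟩

lemma aux_eval {k : Type u} [Field k] (a b : k) (P : MvPolynomial (Fin 2) k) (n : ℕ)
    (hP : P.IsHomogeneous n) :
    aeval ![Polynomial.C a * Polynomial.X, Polynomial.C b * Polynomial.X] P =
      Polynomial.C (eval ![a, b] P) * (Polynomial.X : Polynomial k) ^ n := by
  rw [aeval_def, eval₂_eq', eval_eq', map_sum, Finset.sum_mul]
  refine Finset.sum_congr rfl fun s hs => ?_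
  have := hP.degree_eq_sum_deg_support hs
  have h2 : n = s 0 + s 1 := by
    rw [this, ← Finsupp.degree_apply, Finsupp.degree_eq_sum]; simp
  simp only [Fin.prod_univ_two, Matrix.cons_val_zero, Matrix.cons_val_one]
  rw [h2]
  simp only [Polynomial.algebraMap_eq, map_mul, map_pow]
  ring

lemma aux_main {k : Type u} [Field k] [IsAlgClosed k] (Q : MvPolynomial (Fin 2) k) (m : ℕ)
    (hm : 1 ≤ m) (hQh : Q.IsHomogeneous m) (n : ℕ) : ∀ P : MvPolynomial (Fin 2) k,
    P.IsHomogeneous n → P ≠ 0 →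
    (∀ a b : k, ¬(a = 0 ∧ b = 0) → ¬(eval ![a, b] P = 0 ∧ eval ![a, b] Q = 0)) →
    Module.rank k (MvPolynomial (Fin 2) k ⧸ Ideal.span {P, Q}) = (n * m : ℕ) := by
  induction n with
  | zero =>
    intro P hP hP0 _
    have : P ∈ homogeneousSubmodule (Fin 2) k 0 := hP
    have hPC : P = C (coeff 0 P) := by
      rw [← homogeneousComponent_zero, homogeneousComponent_eq_self hP]
    have hc : coeff 0 P ≠ 0 := fun h => hP0 (by rw [hPC, h, C_0])
    have hu : IsUnit P := by rw [hPC]; exact (isUnit_iff_ne_zero.2 hc).map C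
    have htop : Ideal.span {P, Q} = ⊤ :=
      Ideal.eq_top_of_isUnit_mem _ (Ideal.subset_span (by simp)) hu
    have : Subsingleton (MvPolynomial (Fin 2) k ⧸ Ideal.span {P, Q}) :=
      Ideal.Quotient.subsingleton_iff.2 htop
    simp
  | succ n ih =>
    intro P hP hP0 hPQ
    obtain ⟨a, b, hab, hz⟩ := aux_zero P n hP
    obtain ⟨hs, hker, hL⟩ := aux_line a b hab
    have hQz : eval ![a, b] Q ≠ 0 := fun h => hPQ a b hab ⟨hz, h⟩
    obtain ⟨P1, hP1⟩ := (hker P).1 (by rw [aux_eval a b P _ hP, hz]; simp)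
    have hLh : (C b * X 0 - C a * X 1 : MvPolynomial (Fin 2) k).IsHomogeneous 1 :=
      (isHomogeneous_C_mul_X b 0).sub (isHomogeneous_C_mul_X a 1)
    generalize (C b * X 0 - C a * X 1 : MvPolynomial (Fin 2) k) = L at *
    obtain ⟨P', hP'h, rfl⟩ : ∃ P' : MvPolynomial (Fin 2) k, P'.IsHomogeneous n ∧ P = L * P' := by
      let _ := gradedAlgebra (σ := Fin 2) (R := k)
      refine ⟨(DirectSum.decompose (homogeneousSubmodule (Fin 2) k) P1 n :),
        (DirectSum.decompose (homogeneousSubmodule (Fin 2) k) P1 n).2, ?_⟩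
      have := DirectSum.coe_decompose_mul_add_of_left_mem (homogeneousSubmodule (Fin 2) k)
        (j := n) (b := P1) hLh
      rw [← hP1] at this
      rw [add_comm, DirectSum.decompose_of_mem_same _ hP] at this
      exact this
    have hQφ := aux_eval a b Q m hQh
    rw [aux_step _ hs L P' Q hker hL (by rw [hQφ]; simp [hQz]), ih P' hP'h
      (right_ne_zero_of_mul hP0) (fun x y hxy h => hPQ x y hxy ⟨by simp [h.1], h.2⟩), hQφ]
    have hf : Module.finrank k (Polynomial k ⧸
        Ideal.span {Polynomial.C (eval ![a, b] Q) * (Polynomial.X : Polynomial k) ^ m}) = m := by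
      rw [finrank_quotient_span_eq_natDegree, Polynomial.natDegree_C_mul_X_pow _ _ hQz]
    have := Module.finite_of_finrank_pos (hf.symm ▸ hm)
    rw [← Module.finrank_eq_rank, hf]
    push_cast
    ring

theorem stmt14 {k : Type*} [Field k] [IsAlgClosed k]
    (P Q : MvPolynomial (Fin 2) k) (n m : ℕ) (hn : 1 ≤ n) (hm : 1 ≤ m)
    (hPh : P.IsHomogeneous n) (hQh : Q.IsHomogeneous m)
    (hP : P ≠ 0) (hQ : Q ≠ 0)
    (hlead : ∀ a b : k, ¬(a = 0 ∧ b = 0) →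
      ¬(eval ![a, b] P = 0 ∧ eval ![a, b] Q = 0)) :
    FiniteDimensional k (MvPolynomial (Fin 2) k ⧸ Ideal.span {P, Q}) ∧
    Module.finrank k (MvPolynomial (Fin 2) k ⧸ Ideal.span {P, Q}) = n * m := by
  have h := aux_main Q m hm hQh n P hPh hP hlead
  exact ⟨Module.finite_of_rank_eq_nat h, Module.finrank_eq_of_rank_eq h⟩
end
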